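/- arXiv:0908.1885 — 2 statements merged into one kernel-verified Lean document; each statement's English description precedes it below -/
import Mathlib

section
/- Let p ≥ 1 be a real number. Let k̃ : ℝ × [0,∞) → ℝ be a smooth function, 2π-periodic in its first (angular) variable θ, with k̃(θ,τ) > 0 everywhere, satisfying the rescaled curve-shortening equation ∂k̃/∂τ = p·k̃^{1+1/p}·∂²k̃/∂θ² + p·k̃^{2+1/p} − p·k̃ on ℝ × (0,∞), and suppose sup_θ |k̃(θ,τ) − 1| → 0 as τ → ∞. Then there exists a constant C₁ > 0, depending only on p and the initial data k̃(·,0), such that for all τ ≥ 0: (∫₀^{2π} (∂k̃/∂θ)² dθ)^{1/2} ≤ C₁ and (∫₀^{2π} (∂k̃/∂θ)⁴ dθ)^{1/4} ≤ C₁. -/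
open Real Filter Set

/-!
The bound is a maximum principle for `ψ = u ^ 2 + u_θ ^ 2`, where `u_t = a (u + u_θθ) - c u` with
`a = p u ^ (1 + 1 / p)` and `c = p`. At a spatial maximum of `ψ` with `u_θ ≠ 0`, the first-order
condition `2 u_θ (u + u_θθ) = 0` cancels both the reaction-diffusion term of the equation and the
derivative of `a`, while the second-order condition gives `u_θ (u_θ + u_θθθ) ≤ 0`. Hence
`ψ_t ≤ -2 c ψ < 0` there, so `ψ` never exceeds the larger of its initial maximum and `sup u ^ 2`.
-/

section PartialDerivatives

variable {𝕜 P E : Type*} [NontriviallyNormedField 𝕜] [NormedAddCommGroup P] [NormedSpace 𝕜 P]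
  [NormedAddCommGroup E] [NormedSpace 𝕜 E]

theorem hasDerivAt_fst_slice {F : 𝕜 × P → E} {x : 𝕜} {t : P}
    (h : DifferentiableAt 𝕜 F (x, t)) :
    HasDerivAt (fun y => F (y, t)) (fderiv 𝕜 F (x, t) (1, 0)) x :=
  h.hasFDerivAt.comp_hasDerivAt x ((hasDerivAt_id x).prodMk (hasDerivAt_const x t))

theorem hasDerivAt_snd_slice {F : P × 𝕜 → E} {x : P} {t : 𝕜}
    (h : DifferentiableAt 𝕜 F (x, t)) :
    HasDerivAt (fun s => F (x, s)) (fderiv 𝕜 F (x, t) (0, 1)) t :=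
  h.hasFDerivAt.comp_hasDerivAt t ((hasDerivAt_const t x).prodMk (hasDerivAt_id t))

theorem contDiffOn_deriv_fst {u : 𝕜 → P → E} {s : Set P} {m n : WithTop ℕ∞}
    (hu : ContDiffOn 𝕜 n (fun q : 𝕜 × P => u q.1 q.2) (univ ×ˢ s)) (hmn : m + 1 ≤ n) :
    ContDiffOn 𝕜 m (fun q : 𝕜 × P => deriv (fun x => u x q.2) q.1) (univ ×ˢ s) := by
  intro q hq
  have hswap : ContDiffWithinAt 𝕜 n (Function.uncurry fun (r : 𝕜 × P) x => u x r.2)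
      ((univ ×ˢ s) ×ˢ univ) (q, q.1) :=
    ContDiffWithinAt.comp (t := univ ×ˢ s) (q, q.1) (hu (q.1, q.2) ⟨mem_univ _, hq.2⟩)
      (f := fun r : (𝕜 × P) × 𝕜 => (r.2, r.1.2)) (by fun_prop) fun r hr => ⟨mem_univ _, hr.1.2⟩
  have hfderiv := ContDiffWithinAt.fderivWithin hswap contDiffWithinAt_fst uniqueDiffOn_univ hmn hq
    (subset_univ _)
  simp only [fderivWithin_univ] at hfderiv
  exact hfderiv.clm_apply contDiffWithinAt_const

theorem contDiff_fst_slice {u : 𝕜 → P → E} {s : Set P} {t : P} {n : WithTop ℕ∞}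
    (hu : ContDiffOn 𝕜 n (fun q : 𝕜 × P => u q.1 q.2) (univ ×ˢ s)) (ht : t ∈ s) :
    ContDiff 𝕜 n fun x => u x t :=
  hu.comp_contDiff (contDiff_id.prodMk contDiff_const) fun _ => ⟨mem_univ _, ht⟩

end PartialDerivatives

theorem deriv_deriv_comm {𝕜 E : Type*} [RCLike 𝕜] [NormedAddCommGroup E] [NormedSpace 𝕜 E]
    {u : 𝕜 → 𝕜 → E} {x t : 𝕜}
    (hu : ContDiffAt 𝕜 2 (fun q : 𝕜 × 𝕜 => u q.1 q.2) (x, t)) :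
    deriv (fun s => deriv (fun y => u y s) x) t = deriv (fun y => deriv (fun s => u y s) t) x := by
  set F : 𝕜 × 𝕜 → E := fun q => u q.1 q.2
  have hdiff : ∀ᶠ q in nhds (x, t), DifferentiableAt 𝕜 F q :=
    (hu.eventually (by simp)).mono fun q hq => hq.differentiableAt (by simp)
  have hfst : (fun s => deriv (fun y => u y s) x) =ᶠ[nhds t] fun s => fderiv 𝕜 F (x, s) (1, 0) :=
    ((Continuous.prodMk_right x).tendsto t |>.eventually hdiff).mono fun s hs =>
      (hasDerivAt_fst_slice hs).deriv
  have hsnd : (fun y => deriv (fun s => u y s) t) =ᶠ[nhds x] fun y => fderiv 𝕜 F (y, t) (0, 1) :=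
    ((Continuous.prodMk_left t).tendsto x |>.eventually hdiff).mono fun y hy =>
      (hasDerivAt_snd_slice hy).deriv
  have hdiff' : DifferentiableAt 𝕜 (fderiv 𝕜 F) (x, t) :=
    (hu.fderiv_right (m := 1) (by norm_num)).differentiableAt (by simp)
  have htime := (hasDerivAt_snd_slice hdiff').clm_apply (hasDerivAt_const t ((1, 0) : 𝕜 × 𝕜))
  have hspace := (hasDerivAt_fst_slice hdiff').clm_apply (hasDerivAt_const x ((0, 1) : 𝕜 × 𝕜))
  rw [hfst.deriv_eq, hsnd.deriv_eq, htime.deriv, hspace.deriv]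
  simpa using (hu.isSymmSndFDerivAt (by simp)).eq (0, 1) (1, 0)

section LocalMaxima

variable {f : ℝ → ℝ} {x : ℝ}

theorem deriv_deriv_nonpos_of_isLocalMax (h : IsLocalMax f x) (hf : ContinuousAt f x) :
    deriv (deriv f) x ≤ 0 := by
  by_contra! hpos
  have hmin : IsLocalMin f x := isLocalMin_of_deriv_deriv_pos hpos h.deriv_eq_zero hf
  have hconst : f =ᶠ[nhds x] fun _ => f x := by
    filter_upwards [h, hmin] with y hle hge using le_antisymm hle hge
  simp [hconst.deriv.deriv_eq] at hpos

theorem deriv_nonneg_of_isLocalMaxOn_Iic (h : IsLocalMaxOn f (Iic x) x) : 0 ≤ deriv f x := by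
  by_cases hf : DifferentiableAt ℝ f x
  · have hcone : x - 1 - x ∈ posTangentConeAt (Iic x) x :=
      sub_mem_posTangentConeAt_of_segment_subset <|
        (convex_Iic x).segment_subset self_mem_Iic (by simp)
    simpa using h.hasFDerivWithinAt_nonpos hf.hasDerivAt.hasFDerivAt.hasFDerivWithinAt hcone
  · rw [deriv_zero_of_not_differentiableAt hf]

theorem hasDerivAt_sq_add_deriv_sq (hf : DifferentiableAt ℝ f x)
    (hf' : DifferentiableAt ℝ (deriv f) x) :
    HasDerivAt (fun y => f y ^ 2 + deriv f y ^ 2)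
      (2 * deriv f x * (f x + deriv (deriv f) x)) x :=
  ((hf.hasDerivAt.pow 2).add (hf'.hasDerivAt.pow 2)).congr_deriv (by push_cast; ring)

theorem add_deriv_deriv_eq_zero_of_isLocalMax (hf : DifferentiableAt ℝ f x)
    (hf' : DifferentiableAt ℝ (deriv f) x) (h : IsLocalMax (fun y => f y ^ 2 + deriv f y ^ 2) x)
    (hne : deriv f x ≠ 0) : f x + deriv (deriv f) x = 0 := by
  simpa [hne] using h.hasDerivAt_eq_zero (hasDerivAt_sq_add_deriv_sq hf hf')

theorem deriv_mul_add_deriv_deriv_deriv_nonpos_of_isLocalMax (hf : ContDiff ℝ 3 f)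
    (h : IsLocalMax (fun y => f y ^ 2 + deriv f y ^ 2) x) (hne : deriv f x ≠ 0) :
    deriv f x * (deriv f x + deriv (deriv (deriv f)) x) ≤ 0 := by
  have hf' : ContDiff ℝ 2 (deriv f) := ContDiff.deriv' hf
  have hf'' : ContDiff ℝ 1 (deriv (deriv f)) := ContDiff.deriv' hf'
  have d₀ : Differentiable ℝ f := hf.differentiable (by simp)
  have d₁ : Differentiable ℝ (deriv f) := hf'.differentiable (by simp)
  have d₂ : Differentiable ℝ (deriv (deriv f)) := hf''.differentiable (by simp)
  have hfirst : deriv (fun y => f y ^ 2 + deriv f y ^ 2) =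
      fun y => 2 * deriv f y * (f y + deriv (deriv f) y) :=
    funext fun y => (hasDerivAt_sq_add_deriv_sq (d₀ y) (d₁ y)).deriv
  have hsecond : HasDerivAt (fun y => 2 * deriv f y * (f y + deriv (deriv f) y))
      (2 * deriv (deriv f) x * (f x + deriv (deriv f) x) +
        2 * deriv f x * (deriv f x + deriv (deriv (deriv f)) x)) x :=
    ((d₁ x).hasDerivAt.const_mul 2).mul ((d₀ x).hasDerivAt.add (d₂ x).hasDerivAt)
  have hnonpos := deriv_deriv_nonpos_of_isLocalMax h
    (hasDerivAt_sq_add_deriv_sq (d₀ x) (d₁ x)).continuousAt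
  rw [hfirst, hsecond.deriv, add_deriv_deriv_eq_zero_of_isLocalMax (d₀ x) (d₁ x) h hne] at hnonpos
  linarith

end LocalMaxima

section MaximumPrinciple

theorem exists_isMaxOn_of_periodic {T : Type*} [TopologicalSpace T] {u : ℝ → T → ℝ} {s : Set T}
    {L : ℝ} (hL : 0 < L) (hper : ∀ t, Function.Periodic (fun x => u x t) L) (hs : IsCompact s)
    (hne : s.Nonempty) (hu : ContinuousOn (fun q : ℝ × T => u q.1 q.2) (univ ×ˢ s)) :
    ∃ x, ∃ t ∈ s, ∀ y, ∀ r ∈ s, u y r ≤ u x t := by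
  obtain ⟨⟨x, t⟩, ⟨-, ht⟩, hmax⟩ := (isCompact_Icc.prod hs).exists_isMaxOn
    ((nonempty_Icc.2 hL.le).prod hne) (hu.mono (prod_mono (subset_univ _) Subset.rfl))
  refine ⟨x, t, ht, fun y r hr => ?_⟩
  obtain ⟨z, hz, hyz⟩ := (hper r).exists_mem_Ico₀ hL y
  exact hyz.trans_le (hmax (⟨Ico_subset_Icc_self hz, hr⟩ : (z, r) ∈ Icc 0 L ×ˢ s))

theorem le_of_deriv_neg_at_spatial_max {ψ : ℝ → ℝ → ℝ} {L M : ℝ} (hL : 0 < L)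
    (hper : ∀ t, Function.Periodic (fun x => ψ x t) L)
    (hψ : ContinuousOn (fun q : ℝ × ℝ => ψ q.1 q.2) (univ ×ˢ Ici 0))
    (hinit : ∀ x, ψ x 0 ≤ M)
    (hdecr : ∀ x t, 0 < t → M < ψ x t → (∀ y, ψ y t ≤ ψ x t) → deriv (ψ x) t < 0)
    {x t : ℝ} (ht : 0 ≤ t) : ψ x t ≤ M := by
  obtain ⟨x₀, t₀, ht₀, hmax⟩ := exists_isMaxOn_of_periodic hL hper isCompact_Icc
    (nonempty_Icc.2 ht) (hψ.mono (prod_mono Subset.rfl Icc_subset_Ici_self))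
  refine (hmax x t ⟨ht, le_rfl⟩).trans ?_
  by_contra! hgt
  have ht₀_pos : 0 < t₀ := ht₀.1.lt_of_ne fun h => (hinit x₀).not_gt (h ▸ hgt)
  refine (hdecr x₀ t₀ ht₀_pos hgt fun y => hmax y t₀ ht₀).not_ge
    (deriv_nonneg_of_isLocalMaxOn_Iic ?_)
  filter_upwards [self_mem_nhdsWithin, nhdsWithin_le_nhds (lt_mem_nhds ht₀_pos)] with r hr hr_pos
  exact hmax x₀ r ⟨hr_pos.le, hr.trans ht₀.2⟩

theorem exists_forall_le_of_tendstoUniformly {u : ℝ → ℝ → ℝ} {L b : ℝ} (hL : 0 < L)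
    (hper : ∀ t, Function.Periodic (fun x => u x t) L)
    (hu : ContinuousOn (fun q : ℝ × ℝ => u q.1 q.2) (univ ×ˢ Ici 0))
    (hlim : TendstoUniformly (fun t x => u x t) (fun _ => b) atTop) :
    ∃ B, ∀ x t, 0 ≤ t → u x t ≤ B := by
  obtain ⟨T, hT_nonneg, hT⟩ := (atTop_basis' 0).eventually_iff.1
    (Metric.tendstoUniformly_iff.1 hlim 1 one_pos)
  obtain ⟨x₀, t₀, -, hmax⟩ := exists_isMaxOn_of_periodic hL hper isCompact_Icc
    (nonempty_Icc.2 hT_nonneg) (hu.mono (prod_mono Subset.rfl Icc_subset_Ici_self))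
  refine ⟨max (u x₀ t₀) (b + 1), fun x t ht => ?_⟩
  rcases le_total t T with hle | hge
  · exact le_max_of_le_left (hmax x t ⟨ht, hle⟩)
  · have hdist : |b - u x t| < 1 := hT hge x
    exact le_max_of_le_right (by linarith [(abs_lt.1 hdist).1])

end MaximumPrinciple

section AngularEnergy

/-- The density `u ^ 2 + u_x ^ 2`, the quantity to which the maximum principle is applied. The
first variable is the angle and the second one is time. -/
noncomputable def angularEnergy (u : ℝ → ℝ → ℝ) (x t : ℝ) : ℝ :=
  u x t ^ 2 + deriv (fun y => u y t) x ^ 2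

variable {u : ℝ → ℝ → ℝ} {L : ℝ}

theorem periodic_angularEnergy (hper : ∀ t, Function.Periodic (fun x => u x t) L) (t : ℝ) :
    Function.Periodic (fun x => angularEnergy u x t) L := by
  intro x
  have hderiv : deriv (fun y => u y t) (x + L) = deriv (fun y => u y t) x := by
    rw [← deriv_comp_add_const, funext (hper t)]
  simp only [angularEnergy, hderiv, hper t x]

theorem continuousOn_angularEnergy {s : Set ℝ}
    (hu : ContDiffOn ℝ 1 (fun q : ℝ × ℝ => u q.1 q.2) (univ ×ˢ s)) :
    ContinuousOn (fun q : ℝ × ℝ => angularEnergy u q.1 q.2) (univ ×ˢ s) :=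
  (hu.continuousOn.pow 2).add
    ((contDiffOn_deriv_fst (m := 0) hu (by norm_num)).continuousOn.pow 2)

theorem deriv_angularEnergy {x t : ℝ} (hu : DifferentiableAt ℝ (u x) t)
    (hu' : DifferentiableAt ℝ (fun s => deriv (fun y => u y s) x) t) :
    deriv (angularEnergy u x) t = 2 * u x t * deriv (u x) t +
      2 * deriv (fun y => u y t) x * deriv (fun s => deriv (fun y => u y s) x) t := by
  refine ((hu.hasDerivAt.pow 2).add (hu'.hasDerivAt.pow 2)).deriv.trans ?_
  push_cast
  ring

theorem deriv_deriv_eq_of_quasilinear {a : ℝ → ℝ} {c x t : ℝ}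
    (hu : ContDiffAt ℝ 2 (fun q : ℝ × ℝ => u q.1 q.2) (x, t))
    (hslice : ContDiff ℝ 3 fun y => u y t) (ha : DifferentiableAt ℝ a x)
    (hpde : ∀ y, deriv (u y) t =
      a y * (u y t + deriv (deriv fun z => u z t) y) - c * u y t)
    (hcrit : u x t + deriv (deriv fun z => u z t) x = 0) :
    deriv (fun s => deriv (fun y => u y s) x) t =
      a x * (deriv (fun y => u y t) x + deriv (deriv (deriv fun y => u y t)) x) -
        c * deriv (fun y => u y t) x := by
  have hslice' : ContDiff ℝ 1 (deriv (deriv fun y => u y t)) :=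
    ContDiff.deriv' (ContDiff.deriv' hslice)
  have d₀ := (hslice.differentiable (by simp) x).hasDerivAt
  have d₂ := (hslice'.differentiable (by simp) x).hasDerivAt
  have hrhs := (ha.hasDerivAt.mul (d₀.add d₂)).sub (d₀.const_mul c)
  rw [deriv_deriv_comm hu, funext hpde]
  refine hrhs.deriv.trans ?_
  rw [Pi.add_apply, hcrit]
  ring

theorem deriv_angularEnergy_le_of_isLocalMax {s : Set ℝ} {a : ℝ → ℝ} {c x t : ℝ} (hs : s ∈ nhds t)
    (hu : ContDiffOn ℝ 3 (fun q : ℝ × ℝ => u q.1 q.2) (univ ×ˢ s))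
    (ha : DifferentiableAt ℝ a x) (ha_nonneg : 0 ≤ a x)
    (hpde : ∀ y, deriv (u y) t =
      a y * (u y t + deriv (deriv fun z => u z t) y) - c * u y t)
    (hmax : IsLocalMax (fun y => angularEnergy u y t) x) (hne : deriv (fun y => u y t) x ≠ 0) :
    deriv (angularEnergy u x) t ≤ -2 * c * angularEnergy u x t := by
  have hs' : (univ : Set ℝ) ×ˢ s ∈ nhds (x, t) := prod_mem_nhds univ_mem hs
  have hu_at : ContDiffAt ℝ 3 (fun q : ℝ × ℝ => u q.1 q.2) (x, t) := hu.contDiffAt hs'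
  have hu'_at : ContDiffAt ℝ 2 (fun q : ℝ × ℝ => deriv (fun y => u y q.2) q.1) (x, t) :=
    (contDiffOn_deriv_fst hu (by norm_num)).contDiffAt hs'
  have hslice : ContDiff ℝ 3 fun y => u y t := contDiff_fst_slice hu (mem_of_mem_nhds hs)
  have hslice' : ContDiff ℝ 2 (deriv fun y => u y t) := ContDiff.deriv' hslice
  have hcrit := add_deriv_deriv_eq_zero_of_isLocalMax (hslice.differentiable (by simp) x)
    (hslice'.differentiable (by simp) x) hmax hne
  have hsecond := deriv_mul_add_deriv_deriv_deriv_nonpos_of_isLocalMax hslice hmax hne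
  rw [deriv_angularEnergy
      (hasDerivAt_snd_slice (hu_at.differentiableAt (by simp))).differentiableAt
      (hasDerivAt_snd_slice (hu'_at.differentiableAt (by simp))).differentiableAt,
    deriv_deriv_eq_of_quasilinear (hu_at.of_le (by norm_num)) hslice ha hpde hcrit,
    hpde x, hcrit, angularEnergy]
  linarith [mul_nonpos_of_nonneg_of_nonpos ha_nonneg hsecond]

theorem angularEnergy_le_of_quasilinear {a : ℝ → ℝ → ℝ} {c M : ℝ} (hL : 0 < L) (hc : 0 < c)
    (hu : ContDiffOn ℝ 3 (fun q : ℝ × ℝ => u q.1 q.2) (univ ×ˢ Ici 0))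
    (hper : ∀ t, Function.Periodic (fun x => u x t) L)
    (ha : ∀ x t, 0 < t → DifferentiableAt ℝ (fun y => a y t) x)
    (ha_nonneg : ∀ x t, 0 < t → 0 ≤ a x t)
    (hpde : ∀ x t, 0 < t → deriv (u x) t =
      a x t * (u x t + deriv (deriv fun z => u z t) x) - c * u x t)
    (hinit : ∀ x, angularEnergy u x 0 ≤ M) (hbound : ∀ x t, 0 < t → u x t ^ 2 ≤ M)
    {x t : ℝ} (ht : 0 ≤ t) : angularEnergy u x t ≤ M := by
  refine le_of_deriv_neg_at_spatial_max hL (periodic_angularEnergy hper)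
    (continuousOn_angularEnergy (hu.of_le (by norm_num))) hinit (fun x t ht hgt hmax => ?_) ht
  have hne : deriv (fun y => u y t) x ≠ 0 := fun h =>
    (hbound x t ht).not_gt (by simpa [angularEnergy, h] using hgt)
  have hpos : 0 < angularEnergy u x t := ((sq_nonneg _).trans (hbound x t ht)).trans_lt hgt
  have hle := deriv_angularEnergy_le_of_isLocalMax (Ici_mem_nhds ht) hu (ha x t ht)
    (ha_nonneg x t ht) (fun y => hpde y t ht) (Eventually.of_forall hmax) hne
  linarith [mul_pos hc hpos]

theorem exists_forall_abs_deriv_le_of_quasilinear {a : ℝ → ℝ → ℝ} {c B : ℝ} (hL : 0 < L)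
    (hc : 0 < c) (hu : ContDiffOn ℝ 3 (fun q : ℝ × ℝ => u q.1 q.2) (univ ×ˢ Ici 0))
    (hper : ∀ t, Function.Periodic (fun x => u x t) L)
    (ha : ∀ x t, 0 < t → DifferentiableAt ℝ (fun y => a y t) x)
    (ha_nonneg : ∀ x t, 0 < t → 0 ≤ a x t)
    (hpde : ∀ x t, 0 < t → deriv (u x) t =
      a x t * (u x t + deriv (deriv fun z => u z t) x) - c * u x t)
    (hbound : ∀ x t, 0 < t → |u x t| ≤ B) :
    ∃ R, ∀ x t, 0 ≤ t → |deriv (fun y => u y t) x| ≤ R := by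
  obtain ⟨x₀, t₀, -, hmax⟩ := exists_isMaxOn_of_periodic hL (periodic_angularEnergy hper)
    isCompact_singleton (singleton_nonempty 0) <|
    (continuousOn_angularEnergy (hu.of_le (by norm_num))).mono
      (prod_mono Subset.rfl (singleton_subset_iff.2 self_mem_Ici))
  refine ⟨√(max (angularEnergy u x₀ t₀) (B ^ 2)), fun x t ht => abs_le_sqrt ?_⟩
  refine (le_add_of_nonneg_left (sq_nonneg (u x t))).trans ?_
  exact angularEnergy_le_of_quasilinear hL hc hu hper ha ha_nonneg hpde
    (fun y => le_max_of_le_left (hmax y 0 rfl))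
    (fun y r hr => le_max_of_le_right (sq_le_sq' (abs_le.1 (hbound y r hr)).1
      (abs_le.1 (hbound y r hr)).2)) ht

end AngularEnergy

theorem intervalIntegral_pow_rpow_inv_le {f : ℝ → ℝ} {a b R : ℝ} {n : ℕ} (hn : n ≠ 0)
    (hn_even : Even n) (hab : a ≤ b) (hf : ∀ x, |f x| ≤ R) :
    (∫ x in a..b, f x ^ n) ^ ((1 : ℝ) / n) ≤ R * (b - a) ^ ((1 : ℝ) / n) := by
  have hR : 0 ≤ R := (abs_nonneg _).trans (hf a)
  have hint_nonneg : 0 ≤ ∫ x in a..b, f x ^ n :=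
    intervalIntegral.integral_nonneg hab fun x _ => hn_even.pow_nonneg (f x)
  have hint_le : ∫ x in a..b, f x ^ n ≤ R ^ n * (b - a) := by
    rw [← abs_of_nonneg (sub_nonneg.2 hab), ← norm_of_nonneg hint_nonneg]
    refine intervalIntegral.norm_integral_le_of_norm_le_const fun x _ => ?_
    rw [norm_pow]
    exact pow_le_pow_left₀ (norm_nonneg _) (hf x) n
  calc (∫ x in a..b, f x ^ n) ^ ((1 : ℝ) / n)
      ≤ (R ^ n * (b - a)) ^ ((1 : ℝ) / n) := rpow_le_rpow hint_nonneg hint_le (by positivity)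
    _ = R * (b - a) ^ ((1 : ℝ) / n) := by
      rw [mul_rpow (pow_nonneg hR n) (sub_nonneg.2 hab), one_div, pow_rpow_inv_natCast hR hn]

section CurveShortening

variable {p : ℝ} {K : ℝ → ℝ → ℝ}

theorem exists_forall_abs_deriv_le (hp : 0 < p)
    (hsmooth : ContDiffOn ℝ 3 (fun q : ℝ × ℝ => K q.1 q.2) (univ ×ˢ Ici 0))
    (hper : ∀ τ, Function.Periodic (fun θ => K θ τ) (2 * π))
    (hpos : ∀ θ τ, 0 ≤ τ → 0 < K θ τ)
    (hpde : ∀ θ, ∀ τ ∈ Ioi (0 : ℝ), deriv (fun s => K θ s) τ =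
      p * K θ τ ^ (1 + 1 / p) * deriv (deriv (fun x => K x τ)) θ
        + p * K θ τ ^ (2 + 1 / p) - p * K θ τ)
    (hbdd : ∃ B, ∀ θ τ, 0 ≤ τ → K θ τ ≤ B) :
    ∃ R, ∀ θ τ, 0 ≤ τ → |deriv (fun x => K x τ) θ| ≤ R := by
  obtain ⟨B, hB⟩ := hbdd
  refine exists_forall_abs_deriv_le_of_quasilinear (a := fun θ τ => p * K θ τ ^ (1 + 1 / p))
    two_pi_pos hp hsmooth hper (fun θ τ hτ => ?_) (fun θ τ hτ => ?_) (fun θ τ hτ => ?_)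
    fun θ τ hτ => (abs_of_pos (hpos θ τ hτ.le)).trans_le (hB θ τ hτ.le)
  · have hslice : DifferentiableAt ℝ (fun y => K y τ) θ :=
      (contDiff_fst_slice hsmooth hτ.le).differentiable (by simp) θ
    exact (hslice.rpow_const (Or.inl (hpos θ τ hτ.le).ne')).const_mul p
  · exact mul_nonneg hp.le (rpow_nonneg (hpos θ τ hτ.le).le _)
  · rw [hpde θ τ hτ, show 2 + 1 / p = (1 + 1 / p) + 1 by ring,
      rpow_add_one (hpos θ τ hτ.le).ne']
    ring

theorem first_derivative_L2_L4_bounds_general (hp : 0 < p)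
    (hsmooth : ContDiffOn ℝ 3 (fun q : ℝ × ℝ => K q.1 q.2) (univ ×ˢ Ici 0))
    (hper : ∀ τ, Function.Periodic (fun θ => K θ τ) (2 * π))
    (hpos : ∀ θ τ, 0 ≤ τ → 0 < K θ τ)
    (hpde : ∀ θ, ∀ τ ∈ Ioi (0 : ℝ), deriv (fun s => K θ s) τ =
      p * K θ τ ^ (1 + 1 / p) * deriv (deriv (fun x => K x τ)) θ
        + p * K θ τ ^ (2 + 1 / p) - p * K θ τ)
    (hbdd : ∃ B, ∀ θ τ, 0 ≤ τ → K θ τ ≤ B) :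
    ∃ C : ℝ, 0 < C ∧ ∀ τ : ℝ, 0 ≤ τ →
      (∫ θ in (0 : ℝ)..(2 * π), (deriv (fun x => K x τ) θ) ^ 2) ^ ((1 : ℝ) / 2) ≤ C ∧
      (∫ θ in (0 : ℝ)..(2 * π), (deriv (fun x => K x τ) θ) ^ 4) ^ ((1 : ℝ) / 4) ≤ C := by
  obtain ⟨R, hR⟩ := exists_forall_abs_deriv_le hp hsmooth hper hpos hpde hbdd
  have hR_nonneg : 0 ≤ R := (abs_nonneg _).trans (hR 0 0 le_rfl)
  have hbound (n : ℕ) (hn : n ≠ 0) (hn_even : Even n) (τ : ℝ) (hτ : 0 ≤ τ) :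
      (∫ θ in (0 : ℝ)..(2 * π), (deriv (fun x => K x τ) θ) ^ n) ^ ((1 : ℝ) / n) ≤
        R * (2 * π) + 1 :=
    calc (∫ θ in (0 : ℝ)..(2 * π), (deriv (fun x => K x τ) θ) ^ n) ^ ((1 : ℝ) / n)
        ≤ R * (2 * π - 0) ^ ((1 : ℝ) / n) :=
          intervalIntegral_pow_rpow_inv_le hn hn_even two_pi_pos.le fun θ => hR θ τ hτ
      _ ≤ R * (2 * π) := by
          rw [sub_zero]
          gcongr
          exact rpow_le_self_of_one_le (by linarith [two_le_pi])
            (div_le_one_of_le₀ (mod_cast Nat.one_le_iff_ne_zero.2 hn) n.cast_nonneg)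
      _ ≤ R * (2 * π) + 1 := le_add_of_nonneg_right zero_le_one
  exact ⟨R * (2 * π) + 1, by positivity, fun τ hτ =>
    ⟨by exact_mod_cast hbound 2 (by decide) (by decide) τ hτ,
      by exact_mod_cast hbound 4 (by decide) (by decide) τ hτ⟩⟩

end CurveShortening

/-- Lemma 3.1: uniform-in-time `L²` and `L⁴` bounds on the first angular
derivative of the normalized curvature. -/
theorem first_derivative_L2_L4_bounds
    (p : ℝ) (hp : 1 ≤ p) (K : ℝ → ℝ → ℝ)
    (hsmooth : ContDiffOn ℝ (⊤ : ℕ∞) (fun q : ℝ × ℝ => K q.1 q.2) (univ ×ˢ Ici 0))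
    (hper : ∀ τ : ℝ, Function.Periodic (fun θ => K θ τ) (2 * π))
    (hpos : ∀ θ τ : ℝ, 0 ≤ τ → 0 < K θ τ)
    (hpde : ∀ θ : ℝ, ∀ τ ∈ Ioi (0:ℝ),
      deriv (fun s => K θ s) τ =
        p * K θ τ ^ (1 + 1 / p) * deriv (deriv (fun x => K x τ)) θ
          + p * K θ τ ^ (2 + 1 / p) - p * K θ τ)
    (hconv : TendstoUniformly (fun τ θ => K θ τ) (fun _ => 1) atTop) :
    ∃ C : ℝ, 0 < C ∧ ∀ τ : ℝ, 0 ≤ τ →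
      (∫ θ in (0:ℝ)..(2 * π), (deriv (fun x => K x τ) θ) ^ 2) ^ ((1:ℝ) / 2) ≤ C ∧
      (∫ θ in (0:ℝ)..(2 * π), (deriv (fun x => K x τ) θ) ^ 4) ^ ((1:ℝ) / 4) ≤ C := by
  exact first_derivative_L2_L4_bounds_general (by linarith)
    (mod_cast contDiffOn_infty.1 hsmooth 3) hper hpos hpde
    (exists_forall_le_of_tendstoUniformly two_pi_pos hper hsmooth.continuousOn hconv)
end

section
/- Let p ≥ 1 be a real number. Let k̃ : ℝ × [0,∞) → ℝ be a smooth function, 2π-periodic in its first (angular) variable θ, with k̃(θ,τ) > 0 everywhere, satisfying the rescaled curve-shortening equation ∂k̃/∂τ = p·k̃^{1+1/p}·∂²k̃/∂θ² + p·k̃^{2+1/p} − p·k̃ on ℝ × (0,∞), and suppose sup_θ |k̃(θ,τ) − 1| → 0 as τ → ∞. Then there exists a constant C₂ > 0, depending only on p and the initial data k̃(·,0), such that for all τ ≥ 0: (∫₀^{2π} (∂²k̃/∂θ²)² dθ)^{1/2} ≤ C₂. -/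
open Real Filter Set

/-!
For a solution of `∂ₜu = a(u) ∂ₓ²u + b(u)` the energy `E = ∫ (∂ₓ²u)²` over a period satisfies
`E' = -2 ∫ ∂ₓ³u ∂ₓ(a(u) ∂ₓ²u + b(u))`. The leading term of the integrand is `a(u) (∂ₓ³u)²`, the
dangerous one is `a'(u) ∂ₓu ∂ₓ²u ∂ₓ³u`. If `|u - m| ≤ ε`, integrating by parts gives
`∫ (∂ₓu ∂ₓ²u)² ≤ 16 ε² ∫ (∂ₓ³u)²`, so once `u` is uniformly close to a constant `m` with `a(m) > 0`
the dangerous term is absorbed and interpolation leaves `E' ≤ M - E`. Hence `E` is bounded for late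
times, and it is bounded for early times by compactness.
-/

theorem hasDerivAt_mul_abs_self (x : ℝ) : HasDerivAt (fun y : ℝ => y * |y|) (2 * |x|) x := by
  refine hasDerivAt_of_hasDerivAt_of_ne' (x := 0) (g := fun y => 2 * |y|) (fun y hy => ?_)
    (by fun_prop) (by fun_prop) x
  refine ((hasDerivAt_id y).mul (hasDerivAt_abs hy)).congr_deriv ?_
  rw [id, self_mul_sign]
  ring

theorem le_max_of_hasDerivAt_le_sub {y y' : ℝ → ℝ} {T M t : ℝ}
    (hy : ∀ s, T ≤ s → HasDerivAt y (y' s) s) (hle : ∀ s, T ≤ s → y' s ≤ M - y s) (ht : T ≤ t) :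
    y t ≤ max (y T) M := by
  have hgronwall : y t ≤ gronwallBound (y T) (-1) M (t - T) :=
    le_gronwallBound_of_liminf_deriv_right_le (b := t)
      (fun s hs => (hy s hs.1).continuousAt.continuousWithinAt)
      (fun s hs _ hr => (hy s hs.1).hasDerivWithinAt.liminf_right_slope_le hr) le_rfl
      (fun s hs => by linarith [hle s hs.1]) t ⟨ht, le_rfl⟩
  have hexp : 0 ≤ 1 - exp (-(t - T)) := by
    linarith [exp_le_one_iff.2 (neg_nonpos.2 (sub_nonneg.2 ht))]
  simp only [gronwallBound_of_K_ne_0 (neg_ne_zero.2 one_ne_zero), neg_one_mul] at hgronwall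
  calc y t ≤ exp (-(t - T)) * y T + (1 - exp (-(t - T))) * M := by linarith
    _ ≤ exp (-(t - T)) * max (y T) M + (1 - exp (-(t - T))) * max (y T) M := by
      gcongr
      · exact le_max_left _ _
      · exact le_max_right _ _
    _ = max (y T) M := by ring

theorem periodic_iteratedDeriv {u : ℝ → ℝ} {L : ℝ} (hu : Function.Periodic u L) (k : ℕ) :
    Function.Periodic (iteratedDeriv k u) L := fun x => by
  rw [← congrFun (iteratedDeriv_comp_add_const k u L) x, funext hu]

theorem hasDerivAt_iteratedDeriv {u : ℝ → ℝ} {n k : ℕ} (hu : ContDiff ℝ n u) (hk : k < n) (x : ℝ) :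
    HasDerivAt (iteratedDeriv k u) (iteratedDeriv (k + 1) u x) x := by
  rw [iteratedDeriv_succ]
  exact (hu.differentiable_iteratedDeriv k (mod_cast hk) x).hasDerivAt

theorem integral_mul_deriv_eq_neg_of_eq_endpoints {f f' g g' : ℝ → ℝ} {a b : ℝ}
    (hf : ∀ x, HasDerivAt f (f' x) x) (hg : ∀ x, HasDerivAt g (g' x) x)
    (hf' : Continuous f') (hg' : Continuous g') (hfab : f b = f a) (hgab : g b = g a) :
    ∫ x in a..b, f x * g' x = -∫ x in a..b, f' x * g x := by
  rw [intervalIntegral.integral_mul_deriv_eq_deriv_mul (fun x _ => hf x) (fun x _ => hg x)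
    (hf'.intervalIntegrable _ _) (hg'.intervalIntegrable _ _), hfab, hgab, sub_self, zero_sub]

theorem mul_integral_abs_mul_le {f g : ℝ → ℝ} {a b c : ℝ} (hab : a ≤ b) (hf : Continuous f)
    (hg : Continuous g) (hc : 0 < c) (C : ℝ) :
    C * (∫ x in a..b, |f x * g x|) ≤
      C ^ 2 / c * (∫ x in a..b, f x ^ 2) + c / 4 * ∫ x in a..b, g x ^ 2 := by
  simp only [← intervalIntegral.integral_const_mul]
  rw [← intervalIntegral.integral_add (Continuous.intervalIntegrable (by fun_prop) _ _)
    (Continuous.intervalIntegrable (by fun_prop) _ _)]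
  refine intervalIntegral.integral_mono_on hab (Continuous.intervalIntegrable (by fun_prop) _ _)
    (Continuous.intervalIntegrable (by fun_prop) _ _) fun x _ => sub_nonneg.1 ?_
  have hsq : C ^ 2 / c * f x ^ 2 + c / 4 * g x ^ 2 - C * |f x * g x| =
      (2 * C * |f x| - c * |g x|) ^ 2 / (4 * c) := by
    rw [abs_mul, ← sq_abs (f x), ← sq_abs (g x)]
    field_simp
    ring
  rw [hsq]
  positivity

section Interpolation

variable {u : ℝ → ℝ} {L ε : ℝ}

theorem mul_integral_iteratedDeriv_sq_le {k : ℕ} (hu : ContDiff ℝ (k + 2 : ℕ) u)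
    (hper : Function.Periodic u L) (hL : 0 ≤ L) {c C : ℝ} (hc : 0 < c) (hC : 0 ≤ C) :
    C * (∫ x in 0..L, iteratedDeriv (k + 1) u x ^ 2) ≤
      C ^ 2 / c * (∫ x in 0..L, iteratedDeriv k u x ^ 2) +
        c / 4 * ∫ x in 0..L, iteratedDeriv (k + 2) u x ^ 2 := by
  have hcont₀ : Continuous (iteratedDeriv k u) := hu.continuous_iteratedDeriv _ (by norm_cast; lia)
  have hcont₁ : Continuous (iteratedDeriv (k + 1) u) :=
    hu.continuous_iteratedDeriv _ (by norm_cast; lia)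
  have hcont₂ : Continuous (iteratedDeriv (k + 2) u) := hu.continuous_iteratedDeriv' _
  have hbyparts := integral_mul_deriv_eq_neg_of_eq_endpoints
    (hasDerivAt_iteratedDeriv hu (k := k + 1) (by lia))
    (hasDerivAt_iteratedDeriv hu (k := k) (by lia)) hcont₂ hcont₁
    (periodic_iteratedDeriv hper _).eq (periodic_iteratedDeriv hper _).eq
  refine le_trans ?_ (mul_integral_abs_mul_le hL hcont₀ hcont₂ hc C)
  gcongr
  calc ∫ x in 0..L, iteratedDeriv (k + 1) u x ^ 2
      = -∫ x in 0..L, iteratedDeriv k u x * iteratedDeriv (k + 2) u x := by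
        simpa only [sq, mul_comm] using hbyparts
    _ ≤ |∫ x in 0..L, iteratedDeriv k u x * iteratedDeriv (k + 2) u x| := neg_le_abs _
    _ ≤ _ := intervalIntegral.abs_integral_le_integral_abs hL

theorem integral_abs_iteratedDeriv_pow_three_le {k : ℕ} (hu : ContDiff ℝ (k + 2 : ℕ) u)
    (hper : Function.Periodic u L) (hL : 0 ≤ L) :
    ∫ x in 0..L, |iteratedDeriv (k + 1) u x| ^ 3 ≤
      2 * ∫ x in 0..L,
        |iteratedDeriv k u x * iteratedDeriv (k + 1) u x * iteratedDeriv (k + 2) u x| := by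
  have hd₀ := hasDerivAt_iteratedDeriv hu (k := k) (by lia)
  have hd₁ := hasDerivAt_iteratedDeriv hu (k := k + 1) (by lia)
  have hcont₁ : Continuous (iteratedDeriv (k + 1) u) :=
    hu.continuous_iteratedDeriv _ (by norm_cast; lia)
  have hcont₂ : Continuous (iteratedDeriv (k + 2) u) := hu.continuous_iteratedDeriv' _
  have hend := (periodic_iteratedDeriv hper (k + 1)).eq
  have hbyparts := integral_mul_deriv_eq_neg_of_eq_endpoints
    (f := fun x => iteratedDeriv (k + 1) u x * |iteratedDeriv (k + 1) u x|)
    (fun x => (hasDerivAt_mul_abs_self _).comp x (hd₁ x)) hd₀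
    ((continuous_const.mul hcont₁.abs).mul hcont₂) hcont₁
    (by simp only [hend]) (periodic_iteratedDeriv hper k).eq
  calc ∫ x in 0..L, |iteratedDeriv (k + 1) u x| ^ 3
      = ∫ x in 0..L,
          iteratedDeriv (k + 1) u x * |iteratedDeriv (k + 1) u x| * iteratedDeriv (k + 1) u x := by
        congr 1 with x
        rw [pow_succ', sq_abs]
        ring
    _ ≤ |∫ x in 0..L, 2 * |iteratedDeriv (k + 1) u x| * iteratedDeriv (k + 2) u x *
          iteratedDeriv k u x| := hbyparts.trans_le (neg_le_abs _)
    _ ≤ ∫ x in 0..L, |2 * |iteratedDeriv (k + 1) u x| * iteratedDeriv (k + 2) u x *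
          iteratedDeriv k u x| := intervalIntegral.abs_integral_le_integral_abs hL
    _ = _ := by
        rw [← intervalIntegral.integral_const_mul]
        congr 1 with x
        simp only [abs_mul, abs_two, abs_abs]
        ring

theorem integral_iteratedDeriv_mul_sq_eq {k : ℕ} (hu : ContDiff ℝ (k + 3 : ℕ) u)
    (hper : Function.Periodic u L) :
    ∫ x in 0..L, (iteratedDeriv (k + 1) u x * iteratedDeriv (k + 2) u x) ^ 2 =
      -∫ x in 0..L, iteratedDeriv k u x * (iteratedDeriv (k + 2) u x ^ 3 + 2 *
        (iteratedDeriv (k + 1) u x * iteratedDeriv (k + 2) u x * iteratedDeriv (k + 3) u x)) := by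
  have hd₀ := hasDerivAt_iteratedDeriv hu (k := k) (by lia)
  have hd₁ := hasDerivAt_iteratedDeriv hu (k := k + 1) (by lia)
  have hd₂ := hasDerivAt_iteratedDeriv hu (k := k + 2) (by lia)
  have hcont₁ : Continuous (iteratedDeriv (k + 1) u) :=
    hu.continuous_iteratedDeriv _ (by norm_cast; lia)
  have hcont₂ : Continuous (iteratedDeriv (k + 2) u) :=
    hu.continuous_iteratedDeriv _ (by norm_cast; lia)
  have hcont₃ : Continuous (iteratedDeriv (k + 3) u) := hu.continuous_iteratedDeriv' _
  have hflux : ∀ x, HasDerivAt (fun x => iteratedDeriv (k + 1) u x * iteratedDeriv (k + 2) u x ^ 2)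
      (iteratedDeriv (k + 2) u x ^ 3 + 2 *
        (iteratedDeriv (k + 1) u x * iteratedDeriv (k + 2) u x * iteratedDeriv (k + 3) u x)) x :=
    fun x => ((hd₁ x).mul ((hd₂ x).pow 2)).congr_deriv (by
      simp only [Pi.pow_apply]
      push_cast
      ring)
  have hbyparts := integral_mul_deriv_eq_neg_of_eq_endpoints hflux hd₀
    ((hcont₂.pow 3).add (continuous_const.mul ((hcont₁.mul hcont₂).mul hcont₃))) hcont₁
    (by simp only [(periodic_iteratedDeriv hper _).eq]) (periodic_iteratedDeriv hper k).eq
  simp only [mul_comm (iteratedDeriv k u _), ← hbyparts]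
  congr 1 with x
  ring

theorem integral_iteratedDeriv_mul_sq_le {k : ℕ} (hu : ContDiff ℝ (k + 3 : ℕ) u)
    (hper : Function.Periodic u L) (hL : 0 ≤ L) (hε : ∀ x, |iteratedDeriv k u x| ≤ ε) :
    ∫ x in 0..L, (iteratedDeriv (k + 1) u x * iteratedDeriv (k + 2) u x) ^ 2 ≤
      16 * ε ^ 2 * ∫ x in 0..L, iteratedDeriv (k + 3) u x ^ 2 := by
  have hcont₀ : Continuous (iteratedDeriv k u) := hu.continuous_iteratedDeriv _ (by norm_cast; lia)
  have hcont₁ : Continuous (iteratedDeriv (k + 1) u) :=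
    hu.continuous_iteratedDeriv _ (by norm_cast; lia)
  have hcont₂ : Continuous (iteratedDeriv (k + 2) u) :=
    hu.continuous_iteratedDeriv _ (by norm_cast; lia)
  have hcont₃ : Continuous (iteratedDeriv (k + 3) u) := hu.continuous_iteratedDeriv' _
  have hcube := integral_abs_iteratedDeriv_pow_three_le (k := k + 1) hu hper hL
  have heq := integral_iteratedDeriv_mul_sq_eq hu hper
  set v₀ := iteratedDeriv k u
  set v₁ := iteratedDeriv (k + 1) u
  set v₂ := iteratedDeriv (k + 2) u
  set v₃ := iteratedDeriv (k + 3) u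
  have hε₀ : 0 ≤ ε := (abs_nonneg _).trans (hε 0)
  have hpointwise : ∀ x, -(v₀ x * (v₂ x ^ 3 + 2 * (v₁ x * v₂ x * v₃ x))) ≤
      ε * |v₂ x| ^ 3 + 2 * ε * |v₁ x * v₂ x * v₃ x| := fun x => by
    calc -(v₀ x * (v₂ x ^ 3 + 2 * (v₁ x * v₂ x * v₃ x)))
        ≤ |v₀ x| * |v₂ x ^ 3 + 2 * (v₁ x * v₂ x * v₃ x)| := by
          rw [← abs_mul]
          exact neg_le_abs _
      _ ≤ ε * (|v₂ x| ^ 3 + 2 * |v₁ x * v₂ x * v₃ x|) := by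
          gcongr
          · exact hε x
          · exact (abs_add_le _ _).trans_eq (by rw [abs_pow, abs_mul 2, abs_two])
      _ = _ := by ring
  have hle : ∫ x in 0..L, (v₁ x * v₂ x) ^ 2 ≤
      ε * (∫ x in 0..L, |v₂ x| ^ 3) + 2 * ε * ∫ x in 0..L, |v₁ x * v₂ x * v₃ x| := by
    simp only [heq, ← intervalIntegral.integral_const_mul]
    rw [← intervalIntegral.integral_neg,
      ← intervalIntegral.integral_add (Continuous.intervalIntegrable (by fun_prop) _ _)
        (Continuous.intervalIntegrable (by fun_prop) _ _)]
    exact intervalIntegral.integral_mono_on hL (Continuous.intervalIntegrable (by fun_prop) _ _)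
      (Continuous.intervalIntegrable (by fun_prop) _ _) fun x _ => hpointwise x
  have hyoung :=
    mul_integral_abs_mul_le hL hcont₃ (hcont₁.mul hcont₂) (zero_lt_four' ℝ) (8 * ε)
  simp only [Pi.mul_apply, mul_comm (v₃ _)] at hyoung
  linarith [mul_le_mul_of_nonneg_left hcube hε₀]

theorem mul_integral_deriv_sq_le (hu : ContDiff ℝ 2 u) (hper : Function.Periodic u L)
    (hL : 0 ≤ L) (hε : ∀ x, |u x| ≤ ε) {c C : ℝ} (hc : 0 < c) (hC : 0 ≤ C) :
    C * (∫ x in 0..L, deriv u x ^ 2) ≤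
      C ^ 2 / c * (ε ^ 2 * L) + c / 4 * ∫ x in 0..L, iteratedDeriv 2 u x ^ 2 := by
  have hsq : ∫ x in 0..L, u x ^ 2 ≤ ε ^ 2 * L := by
    refine (intervalIntegral.integral_mono_on hL ((hu.continuous.pow 2).intervalIntegrable _ _)
      intervalIntegrable_const fun x _ => sq_le_sq.2 ((hε x).trans (le_abs_self ε))).trans_eq ?_
    rw [intervalIntegral.integral_const, sub_zero, smul_eq_mul, mul_comm]
  have hinterp := mul_integral_iteratedDeriv_sq_le (k := 0) hu hper hL hc hC
  simp only [zero_add, iteratedDeriv_zero, iteratedDeriv_one] at hinterp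
  exact hinterp.trans (by gcongr)

theorem integral_sq_sub_le_integral_iteratedDeriv_three_mul {H : ℝ → ℝ} {c C₁ C₂ : ℝ}
    (hu : ContDiff ℝ 3 u) (hper : Function.Periodic u L) (hL : 0 ≤ L) (hc : 0 < c) (hC₁ : 0 ≤ C₁)
    (hε : ∀ x, |u x| ≤ ε) (hεc : 8 * ε * C₁ ≤ c) (hH : Continuous H)
    (hcoercive : ∀ x, c * iteratedDeriv 3 u x ^ 2 -
        C₁ * |deriv u x * iteratedDeriv 2 u x * iteratedDeriv 3 u x| -
        C₂ * |deriv u x * iteratedDeriv 3 u x| ≤ iteratedDeriv 3 u x * H x) :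
    (∫ x in 0..L, iteratedDeriv 2 u x ^ 2) - (C₂ ^ 2 + 1) / c * (∫ x in 0..L, deriv u x ^ 2) ≤
      ∫ x in 0..L, iteratedDeriv 3 u x * H x := by
  have hcont₁ : Continuous (deriv u) := hu.continuous_deriv (by norm_num)
  have hcont₂ : Continuous (iteratedDeriv 2 u) := hu.continuous_iteratedDeriv 2 (by norm_num)
  have hcont₃ : Continuous (iteratedDeriv 3 u) := hu.continuous_iteratedDeriv' 3
  have hsq₁₂ := integral_iteratedDeriv_mul_sq_le (k := 0) hu hper hL
    (by simpa only [iteratedDeriv_zero] using hε)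
  have hsq₂ := mul_integral_iteratedDeriv_sq_le (k := 1) hu hper hL hc zero_le_one
  have hcross₁ := mul_integral_abs_mul_le hL (hcont₁.mul hcont₂) hcont₃ hc C₁
  have hcross₂ := mul_integral_abs_mul_le hL hcont₁ hcont₃ hc C₂
  have hint : c * (∫ x in 0..L, iteratedDeriv 3 u x ^ 2) -
      C₁ * (∫ x in 0..L, |deriv u x * iteratedDeriv 2 u x * iteratedDeriv 3 u x|) -
      C₂ * (∫ x in 0..L, |deriv u x * iteratedDeriv 3 u x|) ≤
      ∫ x in 0..L, iteratedDeriv 3 u x * H x := by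
    simp only [← intervalIntegral.integral_const_mul]
    rw [← intervalIntegral.integral_sub (Continuous.intervalIntegrable (by fun_prop) _ _)
        (Continuous.intervalIntegrable (by fun_prop) _ _),
      ← intervalIntegral.integral_sub (Continuous.intervalIntegrable (by fun_prop) _ _)
        (Continuous.intervalIntegrable (by fun_prop) _ _)]
    exact intervalIntegral.integral_mono_on hL (Continuous.intervalIntegrable (by fun_prop) _ _)
      (Continuous.intervalIntegrable (by fun_prop) _ _) fun x _ => hcoercive x
  simp only [Pi.mul_apply, zero_add, Nat.reduceAdd, iteratedDeriv_one] at hsq₁₂ hsq₂ hcross₁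
  have habsorb : C₁ ^ 2 / c * (∫ x in 0..L, (deriv u x * iteratedDeriv 2 u x) ^ 2) ≤
      c / 4 * ∫ x in 0..L, iteratedDeriv 3 u x ^ 2 := by
    have hε₀ : 0 ≤ ε := (abs_nonneg _).trans (hε 0)
    have hY : 0 ≤ ∫ x in 0..L, iteratedDeriv 3 u x ^ 2 :=
      intervalIntegral.integral_nonneg hL fun x _ => sq_nonneg _
    calc _ ≤ C₁ ^ 2 / c * (16 * ε ^ 2 * ∫ x in 0..L, iteratedDeriv 3 u x ^ 2) := by gcongr
      _ = (8 * ε * C₁) ^ 2 / (4 * c) * ∫ x in 0..L, iteratedDeriv 3 u x ^ 2 := by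
        field_simp
        ring
      _ ≤ c ^ 2 / (4 * c) * ∫ x in 0..L, iteratedDeriv 3 u x ^ 2 := by gcongr
      _ = _ := by field_simp
  rw [add_div, add_mul]
  linarith

theorem neg_integral_iteratedDeriv_three_mul_le {H : ℝ → ℝ} {c C₁ C₂ : ℝ} (hu : ContDiff ℝ 3 u)
    (hper : Function.Periodic u L) (hL : 0 ≤ L) (hc : 0 < c) (hC₁ : 0 ≤ C₁) (hε : ∀ x, |u x| ≤ ε)
    (hεc : 8 * ε * C₁ ≤ c) (hH : Continuous H)
    (hcoercive : ∀ x, c * iteratedDeriv 3 u x ^ 2 -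
        C₁ * |deriv u x * iteratedDeriv 2 u x * iteratedDeriv 3 u x| -
        C₂ * |deriv u x * iteratedDeriv 3 u x| ≤ iteratedDeriv 3 u x * H x) :
    -2 * ∫ x in 0..L, iteratedDeriv 3 u x * H x ≤
      ((C₂ ^ 2 + 1) / c) ^ 2 * (ε ^ 2 * L) - ∫ x in 0..L, iteratedDeriv 2 u x ^ 2 := by
  have hdissipation := integral_sq_sub_le_integral_iteratedDeriv_three_mul hu hper hL hc hC₁ hε hεc
    hH hcoercive
  have hinterp := mul_integral_deriv_sq_le (hu.of_le (by norm_num)) hper hL hε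
    (zero_lt_four' ℝ) (C := 2 * ((C₂ ^ 2 + 1) / c)) (by positivity)
  linarith

end Interpolation

section Slices

variable {u : ℝ → ℝ → ℝ} {J : Set ℝ} {x y : ℝ} {n : ℕ}

theorem hasDerivAt_fst_of_hasFDerivWithinAt {E : Type*} [NormedAddCommGroup E] [NormedSpace ℝ E]
    {f : ℝ × ℝ → E} {f' : ℝ × ℝ →L[ℝ] E} (hf : HasFDerivWithinAt f f' (univ ×ˢ J) (x, y))
    (hy : y ∈ J) : HasDerivAt (fun x => f (x, y)) (f' (1, 0)) x :=
  hasDerivWithinAt_univ.1 <| hf.comp_hasDerivWithinAt (f := fun x => (x, y)) x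
    ((hasDerivWithinAt_id x univ).prodMk (hasDerivWithinAt_const x univ y))
    fun x _ => ⟨mem_univ x, hy⟩

theorem hasDerivAt_snd_of_hasFDerivAt {E : Type*} [NormedAddCommGroup E] [NormedSpace ℝ E]
    {f : ℝ × ℝ → E} {f' : ℝ × ℝ →L[ℝ] E} (hf : HasFDerivAt f f' (x, y)) :
    HasDerivAt (fun y => f (x, y)) (f' (0, 1)) y :=
  hf.comp_hasDerivAt y ((hasDerivAt_const y x).prodMk (hasDerivAt_id y))

theorem contDiff_fst_of_contDiffOn (hu : ContDiffOn ℝ n (Function.uncurry u) (univ ×ˢ J))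
    (hy : y ∈ J) : ContDiff ℝ n fun x => u x y :=
  contDiffOn_univ.1 <| hu.comp (f := fun x => (x, y)) (contDiff_prodMk_left y).contDiffOn
    fun x _ => ⟨mem_univ x, hy⟩

theorem contDiffOn_deriv_fst_s8 (hJ : UniqueDiffOn ℝ J)
    (hu : ContDiffOn ℝ (n + 1 : ℕ) (Function.uncurry u) (univ ×ˢ J)) :
    ContDiffOn ℝ n (Function.uncurry fun x y => deriv (fun x => u x y) x) (univ ×ˢ J) :=
  ((hu.fderivWithin (uniqueDiffOn_univ.prod hJ) le_rfl).clm_apply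
    (contDiffOn_const (c := ((1, 0) : ℝ × ℝ)))).congr fun q hq =>
      (hasDerivAt_fst_of_hasFDerivWithinAt
        (hu.differentiableOn (by simp) q hq).hasFDerivWithinAt hq.2).deriv

theorem contDiffOn_iteratedDeriv_fst (hJ : UniqueDiffOn ℝ J) (k : ℕ)
    (hu : ContDiffOn ℝ (n + k : ℕ) (Function.uncurry u) (univ ×ˢ J)) :
    ContDiffOn ℝ n (Function.uncurry fun x y => iteratedDeriv k (fun x => u x y) x)
      (univ ×ˢ J) := by
  induction k generalizing n with
  | zero => simpa only [iteratedDeriv_zero, add_zero] using hu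
  | succ k ih =>
    simp only [iteratedDeriv_succ]
    exact contDiffOn_deriv_fst_s8 hJ (ih (by rwa [add_right_comm]))

theorem contDiffOn_deriv_snd (hJ : IsOpen J)
    (hu : ContDiffOn ℝ (n + 1 : ℕ) (Function.uncurry u) (univ ×ˢ J)) :
    ContDiffOn ℝ n (Function.uncurry fun x y => deriv (u x) y) (univ ×ˢ J) :=
  have hopen := isOpen_univ.prod hJ
  ((hu.fderiv_of_isOpen hopen le_rfl).clm_apply
    (contDiffOn_const (c := ((0, 1) : ℝ × ℝ)))).congr fun q hq =>
      (hasDerivAt_snd_of_hasFDerivAt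
        ((hu.differentiableOn (by simp)).hasFDerivAt (hopen.mem_nhds hq))).deriv

theorem hasDerivAt_snd_of_contDiffOn (hJ : IsOpen J)
    (hu : ContDiffOn ℝ 1 (Function.uncurry u) (univ ×ˢ J)) (hy : y ∈ J) :
    HasDerivAt (u x) (deriv (u x) y) y :=
  (hasDerivAt_snd_of_hasFDerivAt <| (hu.differentiableOn one_ne_zero).hasFDerivAt <|
    (isOpen_univ.prod hJ).mem_nhds ⟨mem_univ x, hy⟩).differentiableAt.hasDerivAt

theorem deriv_deriv_comm_s8 (hJ : IsOpen J)
    (hu : ContDiffOn ℝ 2 (Function.uncurry u) (univ ×ˢ J)) (hy : y ∈ J) :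
    deriv (fun y => deriv (fun x => u x y) x) y = deriv (fun x => deriv (u x) y) x := by
  set f := Function.uncurry u
  have hnhds : ∀ {x y}, y ∈ J → univ ×ˢ J ∈ nhds ((x, y) : ℝ × ℝ) := fun hy =>
    (isOpen_univ.prod hJ).mem_nhds ⟨mem_univ _, hy⟩
  have hf : ∀ {x y}, y ∈ J → HasFDerivAt f (fderiv ℝ f (x, y)) (x, y) := fun hy =>
    (hu.differentiableOn two_ne_zero).hasFDerivAt (hnhds hy)
  have hf' : HasFDerivAt (fderiv ℝ f) (fderiv ℝ (fderiv ℝ f) (x, y)) (x, y) :=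
    ((hu.fderiv_of_isOpen (isOpen_univ.prod hJ) (m := 1) le_rfl).differentiableOn
      one_ne_zero).hasFDerivAt (hnhds hy)
  have hfst : (fun y => deriv (fun x => u x y) x) =ᶠ[nhds y] fun y => fderiv ℝ f (x, y) (1, 0) :=
    (hJ.eventually_mem hy).mono fun s hs =>
      (hasDerivAt_fst_of_hasFDerivWithinAt (hf hs).hasFDerivWithinAt hs).deriv
  have hsnd : (fun x => deriv (u x) y) = fun x => fderiv ℝ f (x, y) (0, 1) :=
    funext fun s => (hasDerivAt_snd_of_hasFDerivAt (hf hy)).deriv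
  rw [hfst.deriv_eq, hsnd,
    ((hasDerivAt_snd_of_hasFDerivAt hf').clm_apply (hasDerivAt_const y (1, 0))).deriv,
    ((hasDerivAt_fst_of_hasFDerivWithinAt hf'.hasFDerivWithinAt hy).clm_apply
      (hasDerivAt_const x (0, 1))).deriv]
  simp only [map_zero, add_zero]
  exact (hu.contDiffAt (hnhds hy)).isSymmSndFDerivAt (by simp) _ _

theorem deriv_iteratedDeriv_comm (hJ : IsOpen J) (k : ℕ)
    (hu : ContDiffOn ℝ (k + 1 : ℕ) (Function.uncurry u) (univ ×ˢ J)) (hy : y ∈ J) :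
    deriv (fun y => iteratedDeriv k (fun x => u x y) x) y =
      iteratedDeriv k (fun x => deriv (u x) y) x := by
  induction k generalizing x with
  | zero => simp only [iteratedDeriv_zero]
  | succ k ih =>
    have hk := contDiffOn_iteratedDeriv_fst (n := 2) hJ.uniqueDiffOn k
      (hu.of_le (by norm_cast; lia))
    simp only [iteratedDeriv_succ]
    rw [deriv_deriv_comm_s8 hJ hk hy]
    congr 1 with x
    exact ih (hu.of_le (by norm_cast; lia))

theorem hasDerivAt_integral_of_contDiffOn {a b : ℝ} (hJ : IsOpen J)
    (hu : ContDiffOn ℝ 1 (Function.uncurry u) (univ ×ˢ J)) (hy : y ∈ J) :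
    HasDerivAt (fun y => ∫ x in a..b, u x y) (∫ x in a..b, deriv (u x) y) y := by
  obtain ⟨δ, hδ, hball⟩ := Metric.nhds_basis_closedBall.mem_iff.1 (hJ.mem_nhds hy)
  have hu' := contDiffOn_deriv_snd (n := 0) hJ hu
  obtain ⟨B, hB⟩ := (isCompact_uIcc.prod (isCompact_closedBall y δ)).exists_bound_of_continuousOn
    (hu'.continuousOn.mono (prod_mono (subset_univ (uIcc a b)) hball))
  refine (intervalIntegral.hasDerivAt_integral_of_dominated_loc_of_deriv_le
    (F' := fun s x => deriv (u x) s) (bound := fun _ => B) (Metric.closedBall_mem_nhds y hδ)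
    ?_ ?_ ?_ ?_ intervalIntegrable_const ?_).2
  · exact (hJ.eventually_mem hy).mono fun s hs =>
      (contDiff_fst_of_contDiffOn hu hs).continuous.aestronglyMeasurable
  · exact (contDiff_fst_of_contDiffOn hu hy).continuous.intervalIntegrable _ _
  · exact (contDiff_fst_of_contDiffOn hu' hy).continuous.aestronglyMeasurable
  · exact .of_forall fun x hx s hs => hB (x, s) ⟨uIoc_subset_uIcc hx, hs⟩
  · exact .of_forall fun x _ s hs => hasDerivAt_snd_of_contDiffOn hJ hu (hball hs)

end Slices

/-- The squared `L²` norm of `∂²u/∂x²` over a period `[0, L]`, as a function of the second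
variable of `u`. -/
noncomputable def secondDerivEnergy (u : ℝ → ℝ → ℝ) (L y : ℝ) : ℝ :=
  ∫ x in 0..L, iteratedDeriv 2 (fun x => u x y) x ^ 2

theorem continuousOn_secondDerivEnergy {u : ℝ → ℝ → ℝ} {J : Set ℝ} {L : ℝ} (hJ : UniqueDiffOn ℝ J)
    (hu : ContDiffOn ℝ 2 (Function.uncurry u) (univ ×ˢ J)) :
    ContinuousOn (secondDerivEnergy u L) J := by
  have hw := (contDiffOn_iteratedDeriv_fst (n := 0) hJ 2 hu).continuousOn
  rw [continuousOn_iff_continuous_domRestrict]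
  refine intervalIntegral.continuous_parametric_intervalIntegral_of_continuous' ?_ 0 L
  exact (hw.pow 2).comp_continuous (f := fun q : J × ℝ => (q.2, (q.1 : ℝ))) (by fun_prop)
    fun q => ⟨mem_univ _, q.1.2⟩

theorem hasDerivAt_secondDerivEnergy {u : ℝ → ℝ → ℝ} {J : Set ℝ} {L y : ℝ} (hJ : IsOpen J)
    (hu : ContDiffOn ℝ 3 (Function.uncurry u) (univ ×ˢ J))
    (hper : ∀ s ∈ J, Function.Periodic (fun x => u x s) L) (hy : y ∈ J) :
    HasDerivAt (secondDerivEnergy u L)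
      (-2 * ∫ x in 0..L, iteratedDeriv 3 (fun x => u x y) x *
        deriv (fun x => deriv (u x) y) x) y := by
  have hw := contDiffOn_iteratedDeriv_fst (n := 1) hJ.uniqueDiffOn 2 hu
  have hv : ContDiff ℝ 3 fun x => u x y := contDiff_fst_of_contDiffOn hu hy
  have hg : ContDiff ℝ 2 fun x => deriv (u x) y :=
    contDiff_fst_of_contDiffOn (contDiffOn_deriv_snd (n := 2) hJ hu) hy
  have hgper : Function.Periodic (fun x => deriv (u x) y) L := fun x =>
    Filter.EventuallyEq.deriv_eq ((hJ.eventually_mem hy).mono fun s hs => hper s hs x)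
  have hbyparts := integral_mul_deriv_eq_neg_of_eq_endpoints
    (hasDerivAt_iteratedDeriv hv (k := 2) (by lia)) (hasDerivAt_iteratedDeriv hg (k := 1) (by lia))
    (hv.continuous_iteratedDeriv' 3) (hg.continuous_iteratedDeriv' 2)
    (periodic_iteratedDeriv (hper y hy) 2).eq (periodic_iteratedDeriv hgper 1).eq
  refine (hasDerivAt_integral_of_contDiffOn
    (u := fun x s => iteratedDeriv 2 (fun x => u x s) x ^ 2) hJ (hw.pow 2) hy).congr_deriv ?_
  calc ∫ x in 0..L, deriv (fun s => iteratedDeriv 2 (fun x => u x s) x ^ 2) y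
      = 2 * ∫ x in 0..L, iteratedDeriv 2 (fun x => u x y) x *
          iteratedDeriv 2 (fun x => deriv (u x) y) x := by
        rw [← intervalIntegral.integral_const_mul]
        congr 1 with x
        rw [deriv_fun_pow (hasDerivAt_snd_of_contDiffOn hJ hw hy).differentiableAt,
          deriv_iteratedDeriv_comm hJ 2 hu hy]
        ring
    _ = _ := by
        simp only [hbyparts, iteratedDeriv_one]
        ring

theorem exists_abs_deriv_le_of_contDiffAt {a : ℝ → ℝ} {m : ℝ} (ha : ContDiffAt ℝ 1 a m) :
    ∃ C, 0 ≤ C ∧ ∀ᶠ x in nhds m, ContDiffAt ℝ 1 a x ∧ |deriv a x| ≤ C := by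
  have hcont : ContinuousAt (fun x => |deriv a x|) m :=
    (ha.fderiv_right (m := 0) le_rfl).continuousAt.clm_apply continuousAt_const |>.abs
  exact ⟨|deriv a m| + 1, by positivity, (ha.eventually (by simp)).and
    (hcont.eventually_le_const (lt_add_one _))⟩

theorem hasDerivAt_comp_mul_iteratedDeriv_two_add_comp {a b v : ℝ → ℝ} {x : ℝ}
    (hv : ContDiff ℝ 3 v) (ha : DifferentiableAt ℝ a (v x)) (hb : DifferentiableAt ℝ b (v x)) :
    HasDerivAt (fun x => a (v x) * iteratedDeriv 2 v x + b (v x))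
      (a (v x) * iteratedDeriv 3 v x + deriv a (v x) * (deriv v x * iteratedDeriv 2 v x) +
        deriv b (v x) * deriv v x) x := by
  have hv₁ := (hv.differentiable (by norm_num) x).hasDerivAt
  have hv₂ := hasDerivAt_iteratedDeriv hv (k := 2) (by lia) x
  exact (((ha.hasDerivAt.comp x hv₁).mul hv₂).add (hb.hasDerivAt.comp x hv₁)).congr_deriv
    (by simp only [Function.comp_apply]; ring)

theorem sub_abs_sub_abs_le_mul_add_add {c C₁ C₂ A B G d₁ d₂ d₃ : ℝ} (hA : c ≤ A) (hB : |B| ≤ C₁)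
    (hG : |G| ≤ C₂) :
    c * d₃ ^ 2 - C₁ * |d₁ * d₂ * d₃| - C₂ * |d₁ * d₃| ≤
      d₃ * (A * d₃ + B * (d₁ * d₂) + G * d₁) := by
  have hA' : c * d₃ ^ 2 ≤ A * d₃ ^ 2 := by gcongr
  have hB' : |B * (d₁ * d₂ * d₃)| ≤ C₁ * |d₁ * d₂ * d₃| := by rw [abs_mul]; gcongr
  have hG' : |G * (d₁ * d₃)| ≤ C₂ * |d₁ * d₃| := by rw [abs_mul]; gcongr
  linarith [neg_abs_le (B * (d₁ * d₂ * d₃)), neg_abs_le (G * (d₁ * d₃))]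

theorem exists_neg_integral_iteratedDeriv_three_mul_le {a b : ℝ → ℝ} {m L : ℝ} (hL : 0 ≤ L)
    (ha : ContDiffAt ℝ 1 a m) (hb : ContDiffAt ℝ 1 b m) (hm : 0 < a m) :
    ∃ ε > 0, ∃ M, ∀ v : ℝ → ℝ, ContDiff ℝ 3 v → Function.Periodic v L → (∀ x, |v x - m| ≤ ε) →
      -2 * ∫ x in 0..L, iteratedDeriv 3 v x *
          deriv (fun x => a (v x) * iteratedDeriv 2 v x + b (v x)) x ≤
        M - ∫ x in 0..L, iteratedDeriv 2 v x ^ 2 := by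
  obtain ⟨C₁, hC₁, ha'⟩ := exists_abs_deriv_le_of_contDiffAt ha
  obtain ⟨C₂, -, hb'⟩ := exists_abs_deriv_le_of_contDiffAt hb
  obtain ⟨δ, hδ, hnear⟩ := Metric.nhds_basis_closedBall.eventually_iff.1
    ((ha'.and hb').and (ha.continuousAt.eventually_const_le (half_lt_self hm)))
  set ε := min δ (a m / 2 / (8 * (C₁ + 1)))
  have hε₀ : 0 < ε := by positivity
  have hεc : 8 * ε * C₁ ≤ a m / 2 := by
    calc 8 * ε * C₁ ≤ ε * (8 * (C₁ + 1)) := by linarith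
      _ ≤ a m / 2 := (le_div_iff₀ (by positivity)).1 (min_le_right _ _)
  refine ⟨ε, hε₀, ((C₂ ^ 2 + 1) / (a m / 2)) ^ 2 * (ε ^ 2 * L), fun v hv hper hvm => ?_⟩
  have hball : ∀ x, v x ∈ Metric.closedBall m δ := fun x => (hvm x).trans (min_le_left _ _)
  have hiter : ∀ k, iteratedDeriv (k + 1) (fun x => v x - m) = iteratedDeriv (k + 1) v :=
    fun k => by simp only [iteratedDeriv_succ', deriv_sub_const_fun]
  have hflux : ContDiff ℝ 1 fun x => a (v x) * iteratedDeriv 2 v x + b (v x) := by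
    have hv₁ : ContDiff ℝ 1 v := hv.of_le (by norm_num)
    have hv₂ : ContDiff ℝ 1 (iteratedDeriv 2 v) := by
      rw [iteratedDeriv_eq_iterate]
      exact hv.iterate_deriv' 1 2
    refine contDiff_iff_contDiffAt.2 fun x => ?_
    obtain ⟨⟨⟨hax, -⟩, hbx, -⟩, -⟩ := hnear (hball x)
    exact ((hax.comp x hv₁.contDiffAt).mul hv₂.contDiffAt).add (hbx.comp x hv₁.contDiffAt)
  have hdissipation := neg_integral_iteratedDeriv_three_mul_le (C₂ := C₂)
    (hv.sub contDiff_const) (fun x => by rw [hper x]) hL (half_pos hm) hC₁ hvm hεc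
    (hflux.continuous_deriv le_rfl) fun x => by
      obtain ⟨⟨⟨hax, haC⟩, hbx, hbC⟩, hac⟩ := hnear (hball x)
      rw [(hasDerivAt_comp_mul_iteratedDeriv_two_add_comp hv (hax.differentiableAt one_ne_zero)
        (hbx.differentiableAt one_ne_zero)).deriv, hiter, hiter, deriv_sub_const_fun]
      exact sub_abs_sub_abs_le_mul_add_add hac haC hbC
  simpa only [hiter] using hdissipation

theorem exists_forall_secondDerivEnergy_le {a b : ℝ → ℝ} {m L : ℝ} {u : ℝ → ℝ → ℝ} (hL : 0 ≤ L)
    (hu : ContDiffOn ℝ 3 (Function.uncurry u) (univ ×ˢ Ici 0))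
    (hper : ∀ t, 0 ≤ t → Function.Periodic (fun x => u x t) L)
    (ha : ContDiffAt ℝ 1 a m) (hb : ContDiffAt ℝ 1 b m) (hm : 0 < a m)
    (hpde : ∀ᶠ t in atTop, ∀ x, deriv (u x) t =
      a (u x t) * iteratedDeriv 2 (fun x => u x t) x + b (u x t))
    (hconv : TendstoUniformly (fun t x => u x t) (fun _ => m) atTop) :
    ∃ M, ∀ t, 0 ≤ t → secondDerivEnergy u L t ≤ M := by
  obtain ⟨ε, hε, M, hM⟩ := exists_neg_integral_iteratedDeriv_three_mul_le hL ha hb hm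
  have hnear : ∀ᶠ t in atTop, ∀ x, |u x t - m| ≤ ε :=
    (Metric.tendstoUniformly_iff.1 hconv ε hε).mono fun t ht x =>
      (abs_sub_comm _ _).trans_le (ht x).le
  obtain ⟨T, hT⟩ := eventually_atTop.1 (hpde.and (hnear.and (eventually_gt_atTop 0)))
  have hu' : ContDiffOn ℝ 3 (Function.uncurry u) (univ ×ˢ Ioi 0) :=
    hu.mono (prod_mono_right Ioi_subset_Ici_self)
  have hlate : ∀ t, T ≤ t → secondDerivEnergy u L t ≤ max (secondDerivEnergy u L T) M := by
    refine fun t => le_max_of_hasDerivAt_le_sub (fun s hs => hasDerivAt_secondDerivEnergy isOpen_Ioi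
      hu' (fun r hr => hper r (le_of_lt hr)) (hT s hs).2.2) fun s hs => ?_
    obtain ⟨hpde_s, hnear_s, hs₀⟩ := hT s hs
    rw [funext hpde_s]
    exact hM _ (contDiff_fst_of_contDiffOn hu' hs₀) (hper s hs₀.le) hnear_s
  obtain ⟨B, hB⟩ := isCompact_Icc.bddAbove_image
    ((continuousOn_secondDerivEnergy (L := L) (uniqueDiffOn_Ici 0) (hu.of_le (by norm_num))).mono
      (Icc_subset_Ici_self : Icc 0 T ⊆ Ici 0))
  refine ⟨max B (max (secondDerivEnergy u L T) M), fun t ht => ?_⟩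
  rcases le_total t T with htT | hTt
  · exact le_max_of_le_left (hB (mem_image_of_mem _ ⟨ht, htT⟩))
  · exact le_max_of_le_right (hlate t hTt)

theorem second_derivative_L2_bound_general {a b : ℝ → ℝ} {m L : ℝ} {K : ℝ → ℝ → ℝ} (hL : 0 ≤ L)
    (hK : ContDiffOn ℝ 3 (fun q : ℝ × ℝ => K q.1 q.2) (univ ×ˢ Ici 0))
    (hper : ∀ τ, 0 ≤ τ → Function.Periodic (fun θ => K θ τ) L)
    (ha : ContDiffAt ℝ 1 a m) (hb : ContDiffAt ℝ 1 b m) (hm : 0 < a m)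
    (hpde : ∀ᶠ τ in atTop, ∀ θ, deriv (fun s => K θ s) τ =
      a (K θ τ) * deriv (deriv (fun x => K x τ)) θ + b (K θ τ))
    (hconv : TendstoUniformly (fun τ θ => K θ τ) (fun _ => m) atTop) :
    ∃ C : ℝ, 0 < C ∧ ∀ τ : ℝ, 0 ≤ τ →
      (∫ θ in (0 : ℝ)..L, (deriv (deriv (fun x => K x τ)) θ) ^ 2) ^ ((1 : ℝ) / 2) ≤ C := by
  simp only [← iteratedDeriv_one (f := deriv _), ← iteratedDeriv_succ'] at hpde ⊢
  obtain ⟨M, hM⟩ := exists_forall_secondDerivEnergy_le hL hK hper ha hb hm hpde hconv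
  refine ⟨max M 1 ^ ((1 : ℝ) / 2), by positivity, fun τ hτ => ?_⟩
  have hnonneg : 0 ≤ secondDerivEnergy K L τ :=
    intervalIntegral.integral_nonneg hL fun θ _ => sq_nonneg _
  exact rpow_le_rpow hnonneg (le_max_of_le_left (hM τ hτ)) (by norm_num)

/-- Lemma 3.2: uniform-in-time `L²` bound on the second angular derivative
of the normalized curvature. -/
theorem second_derivative_L2_bound
    (p : ℝ) (hp : 1 ≤ p) (K : ℝ → ℝ → ℝ)
    (hsmooth : ContDiffOn ℝ (⊤ : ℕ∞) (fun q : ℝ × ℝ => K q.1 q.2) (univ ×ˢ Ici 0))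
    (hper : ∀ τ : ℝ, Function.Periodic (fun θ => K θ τ) (2 * π))
    (hpos : ∀ θ τ : ℝ, 0 ≤ τ → 0 < K θ τ)
    (hpde : ∀ θ : ℝ, ∀ τ ∈ Ioi (0:ℝ),
      deriv (fun s => K θ s) τ =
        p * K θ τ ^ (1 + 1 / p) * deriv (deriv (fun x => K x τ)) θ
          + p * K θ τ ^ (2 + 1 / p) - p * K θ τ)
    (hconv : TendstoUniformly (fun τ θ => K θ τ) (fun _ => 1) atTop) :
    ∃ C : ℝ, 0 < C ∧ ∀ τ : ℝ, 0 ≤ τ →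
      (∫ θ in (0:ℝ)..(2 * π), (deriv (deriv (fun x => K x τ)) θ) ^ 2) ^ ((1:ℝ) / 2) ≤ C := by
  have hrpow (r : ℝ) : ContDiffAt ℝ 1 (fun x : ℝ => p * x ^ r) 1 :=
    contDiffAt_const.mul (contDiffAt_rpow_const_of_ne one_ne_zero)
  refine second_derivative_L2_bound_general (m := 1) (a := fun x => p * x ^ (1 + 1 / p))
    (b := fun x => p * x ^ (2 + 1 / p) - p * x) two_pi_pos.le (hsmooth.of_le (by norm_cast))
    (fun τ _ => hper τ) (hrpow _) ((hrpow _).sub (by fun_prop))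
    (by simp only [one_rpow]; linarith) ?_ hconv
  exact (eventually_gt_atTop 0).mono fun τ hτ θ => (hpde θ τ hτ).trans (add_sub_assoc _ _ _)
end
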